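/- Let ε ∈ (0,1) be irrational with continued fraction expansion ε = [0; a_1, a_2, …], let ℓ satisfy max{ε, 1−ε} < ℓ < 1, and let x0 ∈ [0,ℓ). If w is a nonempty finite word over {A,B,C} and j ∈ ℕ is such that the j-th power w^j (the concatenation of j copies of w) is a factor of the 3iet word u_{ε,ℓ,x0}, then j ≤ 2 + sup_{n} a_n. -/

import Mathlib

/-!
Write `y k` for the orbit of `x0` under the three-interval exchange. Modulo `1` it is a subsequence
of the orbit `n ↦ x0 - n ε` of a rotation: a step on letter `A` or `C` advances the rotation
by one, a step on `B` by two. If `w ^ j` occurs at position `i`, the letters at `k` and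
`k + |w|` agree along `(j - 1) |w|` positions, so `y (k + |w|) - y k` is a constant
`D = r - q ε`, where `q = |w| + |w|_B`. Hence all of the `(j - 1) q + 1` consecutive rotation points
`z ∈ [0, 1)` met on the way (including the intermediate point of each `B`-step) satisfy
`z + D ∈ [0, 1)`, i.e. they avoid an arc of length `|D|` (`exists_good`).

Let `q_n ≤ q < q_{n+1}` be consecutive denominators of convergents of `ε`. By best approximation
(`best_approx`), `|D| ≥ δ_n = |q_n ε - p_n|`. On the other hand, any `q_n + q_{n+1}` consecutive
points of the rotation meet every half-open arc of length `δ_n` (`visit_up`, `visit_down`): from the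
point nearest to the arc on the appropriate side, either `q_n` steps forward or `q_{n+1}` steps
backward are available, and either one moves the point nearer to the arc or into it.
Therefore `(j - 1) q_n < q_n + q_{n+1} ≤ (a_{n+1} + 2) q_n`, so `j ≤ a_{n+1} + 2`.
-/

/-- The alphabet of 3iet words. -/
inductive L3 | A | B | C
deriving DecidableEq, Inhabited

/-- The three-interval exchange transformation `T_{ε,ℓ}`. -/
noncomputable def T3 (ε ℓ : ℝ) (x : ℝ) : ℝ :=
  if x < ℓ - 1 + ε then x + 1 - ε
  else if x < ε then x + 1 - 2*ε
  else x - ε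

/-- The 3iet word `u_{ε,ℓ,x0}` coding the orbit of `x0` under `T_{ε,ℓ}`. -/
noncomputable def u3 (ε ℓ x0 : ℝ) (n : ℕ) : L3 :=
  if (T3 ε ℓ)^[n] x0 < ℓ - 1 + ε then L3.A
  else if (T3 ε ℓ)^[n] x0 < ε then L3.B
  else L3.C

/-- The two-interval exchange transformation `T_ε`. -/
noncomputable def T2 (ε : ℝ) (x : ℝ) : ℝ := if x < ε then x + 1 - ε else x - ε

/-- The Sturmian word `u_{ε,x0}` of slope `ε` coding the orbit of `x0` under `T_ε`
(letter `0` is `false`, letter `1` is `true`). -/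
noncomputable def u2 (ε x0 : ℝ) (n : ℕ) : Bool := if (T2 ε)^[n] x0 < ε then false else true

/-- `w` is a factor of the infinite word `u`. -/
def IsFactor {α : Type*} (w : List α) (u : ℕ → α) : Prop :=
  ∃ i : ℕ, w = (List.range w.length).map fun j => u (i + j)

/-- The prefix of length `m` of the periodic infinite word `www⋯`;
for `|w| ≤ m` this is the fractional power `w^{m/|w|}`. -/
def powPrefix {α : Type*} [Inhabited α] (w : List α) (m : ℕ) : List α :=
  (List.range m).map fun j => w.getD (j % w.length) default

/-- The index of the factor `w` in the infinite word `u`: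
`sup {r ∈ ℚ, r ≥ 1, r|w| ∈ ℕ | w^r is a factor of u}`, as an element of `ℝ ∪ {+∞}`. -/
noncomputable def factorIndex {α : Type*} [Inhabited α] (u : ℕ → α) (w : List α) : EReal :=
  sSup {x : EReal | ∃ m : ℕ, w.length ≤ m ∧ IsFactor (powPrefix w m) u ∧
    x = (((m : ℝ) / (w.length : ℝ) : ℝ) : EReal)}

/-- The index of the infinite word `u`: `sup {ind(w) | w a nonempty factor of u}`. -/
noncomputable def wordIndex {α : Type*} [Inhabited α] (u : ℕ → α) : EReal :=
  sSup {x : EReal | ∃ w : List α, w ≠ [] ∧ IsFactor w u ∧ x = factorIndex u w}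

/-- The Gauss map `x ↦ {1/x}`. -/
noncomputable def gaussMap (x : ℝ) : ℝ := Int.fract x⁻¹

/-- `cfa ε n` is the partial quotient `a_{n+1}` of the continued fraction
expansion `ε = [0; a₁, a₂, a₃, …]` of the irrational `ε ∈ (0,1)`. -/
noncomputable def cfa (ε : ℝ) (n : ℕ) : ℕ := ⌊(gaussMap^[n] ε)⁻¹⌋₊

/-- The morphism `σ01 : A ↦ 0, B ↦ 01, C ↦ 1`. -/
def sigma01 : L3 → List Bool
  | L3.A => [false]
  | L3.B => [false, true]
  | L3.C => [true]

/-- The morphism `σ10 : A ↦ 0, B ↦ 10, C ↦ 1`. -/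
def sigma10 : L3 → List Bool
  | L3.A => [false]
  | L3.B => [true, false]
  | L3.C => [true]

/-- The image `φ(u₀)φ(u₁)φ(u₂)⋯` of an infinite word `u` under a (nonerasing) morphism `φ`. -/
def morphWord (φ : L3 → List Bool) (u : ℕ → L3) (m : ℕ) : Bool :=
  ((List.range (m+1)).flatMap fun k => φ (u k)).getD m false

/-- `u` is a uniformly recurrent infinite word: every factor occurs infinitely often
with bounded gaps (every window of some length `R` contains an occurrence). -/
def UniformlyRecurrent {α : Type*} (u : ℕ → α) : Prop :=
  ∀ w : List α, IsFactor w u → ∃ R : ℕ, ∀ i : ℕ, ∃ j : ℕ, i ≤ j ∧ j < i + R ∧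
    w = (List.range w.length).map fun t => u (j + t)

/-- `u` is eventually periodic. -/
def EventuallyPeriodic {α : Type*} (u : ℕ → α) : Prop :=
  ∃ N p : ℕ, 0 < p ∧ ∀ n : ℕ, N ≤ n → u (n + p) = u n

/-- The standard words of `ε = [0; a₁, a₂, …]`, with the index shifted by one:
`sw ε 0 = s₋₁ = 1`, `sw ε 1 = s₀ = 0`, `sw ε 2 = s₁ = s₀^{a₁-1} s₋₁`, and
`sw ε (n+3) = s_{n+2} = s_{n+1}^{a_{n+2}} s_n`. -/
noncomputable def sw (ε : ℝ) : ℕ → List Bool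
  | 0 => [true]
  | 1 => [false]
  | 2 => (List.replicate (cfa ε 0 - 1) ([false] : List Bool)).flatten ++ [true]
  | (n+3) => (List.replicate (cfa ε (n+1)) (sw ε (n+2))).flatten ++ sw ε (n+1)

/-- Denominators of the convergents of `ε`, shifted by one: `qq ε 0 = q₋₁ = 0`,
`qq ε 1 = q₀ = 1`, and `qq ε (n+2) = q_{n+1} = a_{n+1} q_n + q_{n-1}`. -/
noncomputable def qq (ε : ℝ) : ℕ → ℕ
  | 0 => 0
  | 1 => 1
  | (n+2) => cfa ε n * qq ε (n+1) + qq ε n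

/-- `u` is a 3iet word. -/
def Is3ietWord (u : ℕ → L3) : Prop :=
  ∃ ε ℓ x0 : ℝ, Irrational ε ∧ 0 < ε ∧ ε < 1 ∧ max ε (1 - ε) < ℓ ∧ ℓ < 1 ∧
    x0 ∈ Set.Ico 0 ℓ ∧ u = u3 ε ℓ x0

/-- `v` is a Sturmian word. -/
def IsSturmianWord (v : ℕ → Bool) : Prop :=
  ∃ ε x0 : ℝ, Irrational ε ∧ 0 < ε ∧ ε < 1 ∧ x0 ∈ Set.Ico (0:ℝ) 1 ∧ v = u2 ε x0

/-- The infinite binary word `v1` is amicable with `v2` (`v1 ∝ v2`). -/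
def AmicableInf (v1 v2 : ℕ → Bool) : Prop :=
  ∃ w : ℕ → L3, v1 = morphWord sigma01 w ∧ v2 = morphWord sigma10 w

/-- The morphism `Φ_k : A ↦ 0, B ↦ 01^{k+1}, C ↦ 01^k`. -/
def Phi (k : ℕ) : L3 → List Bool
  | L3.A => [false]
  | L3.B => false :: List.replicate (k+1) true
  | L3.C => false :: List.replicate k true

/-- The infinite word `B₀B₁B₂⋯` obtained by concatenating the sequence of
(nonempty) blocks `B`. -/
def concatOfBlocks (B : ℕ → List Bool) (m : ℕ) : Bool :=
  ((List.range (m+1)).flatMap B).getD m false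

/-! ### Continued fractions -/

/-- Numerators of the convergents of `ε`, with the same index shift as `qq`:
`pp ε 0 = p₋₁ = 1` and `pp ε 1 = p₀ = 0`. -/
noncomputable def pp (ε : ℝ) : ℕ → ℕ
  | 0 => 1
  | 1 => 0
  | (n+2) => cfa ε n * pp ε (n+1) + pp ε n

/-- The approximation errors `|q ε - p|` of the convergents, with the same index shift as `qq`,
written as a product of iterates of the Gauss map. -/
noncomputable def eta (ε : ℝ) : ℕ → ℝ
  | 0 => 1
  | (n+1) => eta ε n * gaussMap^[n] ε

lemma gauss_iter {ε : ℝ} (hirr : Irrational ε) (h0 : 0 < ε) (h1 : ε < 1) (n : ℕ) :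
    Irrational (gaussMap^[n] ε) ∧ 0 < gaussMap^[n] ε ∧ gaussMap^[n] ε < 1 := by
  induction n with
  | zero => exact ⟨hirr, h0, h1⟩
  | succ n ih =>
    rw [Function.iterate_succ_apply']
    obtain ⟨hi, _, _⟩ := ih
    have hi' : Irrational (gaussMap (gaussMap^[n] ε)) := by
      unfold gaussMap
      rw [Int.fract]
      exact (irrational_inv_iff.2 hi).sub_intCast _
    refine ⟨hi', lt_of_le_of_ne (Int.fract_nonneg _) ?_, Int.fract_lt_one _⟩
    exact fun h => hi'.ne_zero h.symm

lemma gauss_succ {ε : ℝ} (hirr : Irrational ε) (h0 : 0 < ε) (h1 : ε < 1) (n : ℕ) :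
    (gaussMap^[n] ε)⁻¹ = cfa ε n + gaussMap^[n+1] ε := by
  rw [Function.iterate_succ_apply']
  obtain ⟨_, hp, _⟩ := gauss_iter hirr h0 h1 n
  have h : ((cfa ε n : ℕ) : ℝ) = (⌊(gaussMap^[n] ε)⁻¹⌋ : ℝ) := by
    unfold cfa
    rw [natCast_floor_eq_intCast_floor (inv_pos.2 hp).le]
  rw [h]
  unfold gaussMap
  exact (Int.floor_add_fract _).symm

lemma one_le_cfa {ε : ℝ} (hirr : Irrational ε) (h0 : 0 < ε) (h1 : ε < 1) (n : ℕ) :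
    1 ≤ cfa ε n := by
  obtain ⟨_, hp, hl⟩ := gauss_iter hirr h0 h1 n
  unfold cfa
  rw [Nat.one_le_floor_iff]
  exact (one_lt_inv₀ hp).2 hl |>.le

lemma eta_pos {ε : ℝ} (hirr : Irrational ε) (h0 : 0 < ε) (h1 : ε < 1) (n : ℕ) :
    0 < eta ε n := by
  induction n with
  | zero => simp [eta]
  | succ n ih => exact mul_pos ih (gauss_iter hirr h0 h1 n).2.1

lemma eta_succ_lt {ε : ℝ} (hirr : Irrational ε) (h0 : 0 < ε) (h1 : ε < 1) (n : ℕ) :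
    eta ε (n+1) < eta ε n :=
  mul_lt_of_lt_one_right (eta_pos hirr h0 h1 n) (gauss_iter hirr h0 h1 n).2.2

lemma eta_rec {ε : ℝ} (hirr : Irrational ε) (h0 : 0 < ε) (h1 : ε < 1) (n : ℕ) :
    eta ε (n+2) = eta ε n - cfa ε n * eta ε (n+1) := by
  have hg := gauss_succ hirr h0 h1 n
  obtain ⟨_, hp, _⟩ := gauss_iter hirr h0 h1 n
  have hm : gaussMap^[n] ε * (cfa ε n + gaussMap^[n+1] ε) = 1 := by
    rw [← hg]; exact mul_inv_cancel₀ hp.ne'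
  simp only [eta]
  linear_combination eta ε n * hm

lemma qq_sub_pp {ε : ℝ} (hirr : Irrational ε) (h0 : 0 < ε) (h1 : ε < 1) (n : ℕ) :
    (qq ε n : ℝ) * ε - pp ε n = (-1) ^ (n+1) * eta ε n ∧
    (qq ε (n+1) : ℝ) * ε - pp ε (n+1) = (-1) ^ n * eta ε (n+1) := by
  induction n with
  | zero => simp [qq, pp, eta]
  | succ n ih =>
    refine ⟨by rw [ih.2]; ring, ?_⟩
    rw [eta_rec hirr h0 h1]
    simp only [qq, pp]
    push_cast
    linear_combination (cfa ε n : ℝ) * ih.2 + ih.1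

/-- Consecutive convergents are unimodular. -/
lemma qq_pp_det (ε : ℝ) (n : ℕ) :
    (qq ε (n+1) : ℤ) * pp ε n - qq ε n * pp ε (n+1) = (-1) ^ n := by
  induction n with
  | zero => simp [qq, pp]
  | succ n ih =>
    simp only [qq, pp]
    push_cast
    linear_combination -ih

lemma qq_le_succ {ε : ℝ} (hirr : Irrational ε) (h0 : 0 < ε) (h1 : ε < 1) (n : ℕ) :
    qq ε n ≤ qq ε (n+1) := by
  cases n with
  | zero => simp [qq]
  | succ n =>
    have := one_le_cfa hirr h0 h1 n
    simp only [qq]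
    nlinarith

lemma le_qq_succ {ε : ℝ} (hirr : Irrational ε) (h0 : 0 < ε) (h1 : ε < 1) (n : ℕ) :
    n ≤ qq ε (n+1) ∧ 1 ≤ qq ε (n+1) := by
  induction n using Nat.strong_induction_on with
  | _ n ih =>
    match n with
    | 0 => simp [qq]
    | 1 =>
      have := one_le_cfa hirr h0 h1 0
      simp [qq]; omega
    | n+2 =>
      have ha := one_le_cfa hirr h0 h1 (n+1)
      have h2 := ih (n+1) (by omega)
      have h3 := ih n (by omega)
      have : qq ε (n+1+2) = cfa ε (n+1) * qq ε (n+1+1) + qq ε (n+1) := rfl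
      have hm : qq ε (n+1+1) ≤ cfa ε (n+1) * qq ε (n+1+1) := Nat.le_mul_of_pos_left _ ha
      show n + 2 ≤ qq ε (n+1+2) ∧ 1 ≤ qq ε (n+1+2)
      omega

/-- Best approximation: no denominator below `qq ε (n+1)` does better than `qq ε n`. -/
lemma best_approx {ε : ℝ} (hirr : Irrational ε) (h0 : 0 < ε) (h1 : ε < 1) (n : ℕ)
    (q r : ℤ) (hq : 0 < q) (hqn : q < qq ε (n+1)) :
    eta ε n ≤ |(r : ℝ) - q * ε| := by
  have hdet := qq_pp_det ε n
  obtain ⟨e1, e2⟩ := qq_sub_pp hirr h0 h1 n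
  have hη := eta_pos hirr h0 h1 n
  have hη' := eta_pos hirr h0 h1 (n+1)
  -- coordinates of `(q, r)` in the basis given by the two convergents
  obtain ⟨x, y, hxq, hxr⟩ : ∃ x y : ℤ, q = x * qq ε n + y * qq ε (n+1) ∧
      r = x * pp ε n + y * pp ε (n+1) := by
    have hs : ((-1 : ℤ) ^ n) * (-1) ^ n = 1 := by rw [← mul_pow]; simp
    refine ⟨(-1)^n * (qq ε (n+1) * r - pp ε (n+1) * q),
      (-1)^n * (pp ε n * q - qq ε n * r), ?_, ?_⟩
    · linear_combination (-q) * hs - (-1 : ℤ)^n * q * hdet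
    · linear_combination (-r) * hs - (-1 : ℤ)^n * r * hdet
  have hD : (r : ℝ) - q * ε = (-1)^n * (x * eta ε n - y * eta ε (n+1)) := by
    rw [hxq, hxr]
    push_cast
    have h3 : (-1 : ℝ)^(n+1) = - (-1)^n := by ring
    rw [h3] at e1
    linear_combination -(x : ℝ) * e1 - (y : ℝ) * e2
  rw [hD, abs_mul, abs_pow, abs_neg, abs_one, one_pow, one_mul]
  have hqq0 : (0 : ℤ) ≤ qq ε n := Int.natCast_nonneg _
  have hqq1 : (0 : ℤ) ≤ qq ε (n+1) := Int.natCast_nonneg _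
  -- `0 < q < qq ε (n+1)` forces `x ≠ 0` and `x`, `y` not of the same strict sign
  have hcase : (1 ≤ x ∧ y ≤ 0) ∨ (x ≤ -1 ∧ 0 ≤ y) := by
    rcases lt_trichotomy x 0 with hx | hx | hx
    · right
      refine ⟨by omega, ?_⟩
      by_contra hy
      push Not at hy
      nlinarith
    · exfalso
      subst hx
      rcases le_or_gt y 0 with hy | hy <;> nlinarith
    · left
      refine ⟨by omega, ?_⟩
      by_contra hy
      push Not at hy
      nlinarith
  rcases hcase with ⟨hx, hy⟩ | ⟨hx, hy⟩
  · have hx' : (1 : ℝ) ≤ x := by exact_mod_cast hx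
    have hy' : (y : ℝ) ≤ 0 := by exact_mod_cast hy
    refine le_trans ?_ (le_abs_self _)
    nlinarith
  · have hx' : (x : ℝ) ≤ -1 := by exact_mod_cast hx
    have hy' : (0 : ℝ) ≤ y := by exact_mod_cast hy
    refine le_trans ?_ (neg_le_abs _)
    nlinarith

/-! ### Rotation orbits meet every arc of length `eta ε n` -/

/-- If `q` steps forward and `q'` steps backward both rotate upwards, by `δ` and `δ' ≤ δ`, then
`q + q'` consecutive points cannot all avoid the arc `[0, δ)`: consider the largest one. -/
lemma visit_up (g : ℕ → ℝ) (q q' M : ℕ) (δ δ' : ℝ) (hq : 0 < q) (hδ' : 0 < δ') (hle : δ' ≤ δ)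
    (h : ∀ k, ∃ r : ℤ, g (k+q) = g k + δ + r)
    (h' : ∀ k, ∃ r : ℤ, g k = g (k+q') + δ' + r)
    (hav : ∀ k, M ≤ k → k < M + q + q' → δ ≤ Int.fract (g k)) : False := by
  obtain ⟨k, hk, hmax⟩ := Finset.exists_max_image (Finset.Ico M (M+q+q')) (fun k => Int.fract (g k))
    ⟨M, by simp; omega⟩
  rw [Finset.mem_Ico] at hk
  -- a move up from `k` by a positive amount at most `δ` cannot stay in the range of times
  have key : ∀ k' s, M ≤ k' → k' < M + q + q' → 0 < s → s ≤ δ →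
      (∃ r : ℤ, g k' = g k + s + r) → False := by
    rintro k' s h1 h2 hs hsδ ⟨r, hr⟩
    have hm := hmax k' (by rw [Finset.mem_Ico]; exact ⟨h1, h2⟩)
    have ha := hav k' h1 h2
    have hf : Int.fract (g k') = Int.fract (Int.fract (g k) + s) := by
      rw [hr, Int.fract_add_intCast]
      conv_lhs => rw [← Int.floor_add_fract (g k), add_assoc, Int.fract_intCast_add]
    have hb0 := Int.fract_nonneg (g k)
    have hb1 := Int.fract_lt_one (g k)
    by_cases hlt : Int.fract (g k) + s < 1
    · rw [(Int.fract_eq_self (a := Int.fract (g k) + s)).2 ⟨by linarith, hlt⟩] at hf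
      linarith
    · push Not at hlt
      have hsub : Int.fract (Int.fract (g k) + s) ≤ Int.fract (g k) + s - 1 := by
        have : (1 : ℤ) ≤ ⌊Int.fract (g k) + s⌋ := Int.le_floor.2 (by exact_mod_cast hlt)
        have : (1 : ℝ) ≤ ⌊Int.fract (g k) + s⌋ := by exact_mod_cast this
        have := Int.self_sub_floor (Int.fract (g k) + s)
        linarith
      linarith
  by_cases hkq : k + q < M + q + q'
  · exact key (k+q) δ (by omega) hkq (by linarith) le_rfl (h k)
  · obtain ⟨c, rfl⟩ : ∃ c, k = c + q' := ⟨k - q', by omega⟩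
    exact key c δ' (by omega) (by omega) hδ' hle (h' c)

/-- The mirror image of `visit_up`: consider the smallest point. -/
lemma visit_down (g : ℕ → ℝ) (q q' M : ℕ) (δ δ' : ℝ) (hq : 0 < q) (hδ' : 0 < δ') (hle : δ' ≤ δ)
    (h : ∀ k, ∃ r : ℤ, g (k+q) = g k - δ + r)
    (h' : ∀ k, ∃ r : ℤ, g k = g (k+q') - δ' + r)
    (hav : ∀ k, M ≤ k → k < M + q + q' → δ ≤ Int.fract (g k)) : False := by
  obtain ⟨k, hk, hmin⟩ := Finset.exists_min_image (Finset.Ico M (M+q+q')) (fun k => Int.fract (g k))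
    ⟨M, by simp; omega⟩
  rw [Finset.mem_Ico] at hk
  have key : ∀ k' s, M ≤ k' → k' < M + q + q' → 0 < s → s ≤ δ →
      (∃ r : ℤ, g k' = g k - s + r) → False := by
    rintro k' s h1 h2 hs hsδ ⟨r, hr⟩
    have hm := hmin k' (by rw [Finset.mem_Ico]; exact ⟨h1, h2⟩)
    have ha := hav k hk.1 hk.2
    have hf : Int.fract (g k') = Int.fract (Int.fract (g k) - s) := by
      rw [hr, Int.fract_add_intCast]
      conv_lhs => rw [← Int.floor_add_fract (g k), add_sub_assoc, Int.fract_intCast_add]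
    have hb1 := Int.fract_lt_one (g k)
    rw [(Int.fract_eq_self (a := Int.fract (g k) - s)).2 ⟨by linarith, by linarith⟩] at hf
    linarith
  by_cases hkq : k + q < M + q + q'
  · exact key (k+q) δ (by omega) hkq (by linarith) le_rfl (h k)
  · obtain ⟨c, rfl⟩ : ∃ c, k = c + q' := ⟨k - q', by omega⟩
    exact key c δ' (by omega) (by omega) hδ' hle (h' c)

/-- Among `qq ε (n+1) + qq ε (n+2)` consecutive points of an orbit of the rotation by `-ε`,
one lies in the arc `[0, eta ε (n+1))`. -/
lemma rotation_visits {ε : ℝ} (hirr : Irrational ε) (h0 : 0 < ε) (h1 : ε < 1) (n M : ℕ) (a : ℝ)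
    (hav : ∀ k, M ≤ k → k < M + qq ε (n+1) + qq ε (n+2) →
      eta ε (n+1) ≤ Int.fract (a - k * ε)) : False := by
  obtain ⟨e1, e2⟩ := qq_sub_pp hirr h0 h1 (n+1)
  have hq := (le_qq_succ hirr h0 h1 n).2
  have hη' := eta_pos hirr h0 h1 (n+2)
  have hle := (eta_succ_lt hirr h0 h1 (n+1)).le
  rcases Nat.even_or_odd n with hn | hn
  · rw [pow_succ, pow_succ, hn.neg_one_pow] at e1
    rw [pow_succ, hn.neg_one_pow] at e2
    refine visit_down (fun k => a - k * ε) _ _ M _ _ hq hη' hle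
      (fun k => ⟨-(pp ε (n+1) : ℤ), ?_⟩) (fun k => ⟨(pp ε (n+2) : ℤ), ?_⟩) hav
    · push_cast; linear_combination -e1
    · push_cast; linear_combination e2
  · rw [pow_succ, pow_succ, hn.neg_one_pow] at e1
    rw [pow_succ, hn.neg_one_pow] at e2
    refine visit_up (fun k => a - k * ε) _ _ M _ _ hq hη' hle
      (fun k => ⟨-(pp ε (n+1) : ℤ), ?_⟩) (fun k => ⟨(pp ε (n+2) : ℤ), ?_⟩) hav
    · push_cast; linear_combination -e1
    · push_cast; linear_combination e2

/-! ### The three-interval exchange as a speed-up of the rotation -/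

/-- The number of rotation steps performed by one step of the exchange: the length of
`sigma01` of the letter. -/
def stepTime : L3 → ℕ
  | L3.A => 1
  | L3.B => 2
  | L3.C => 1

/-- The integer part of the translation performed on each interval: the exchange acts on the
interval of letter `X` by `x ↦ x - stepTime X * ε + stepInt X`. -/
def stepInt : L3 → ℤ
  | L3.A => 1
  | L3.B => 1
  | L3.C => 0

/-- The rotation time reached after `k` steps of the exchange. -/
def rotTime (u : ℕ → L3) (k : ℕ) : ℕ := ∑ i ∈ Finset.range k, stepTime (u i)

/-- The accumulated integer translation after `k` steps of the exchange. -/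
def rotInt (u : ℕ → L3) (k : ℕ) : ℤ := ∑ i ∈ Finset.range k, stepInt (u i)

lemma T3_step (ε ℓ x0 : ℝ) (k : ℕ) :
    (T3 ε ℓ)^[k+1] x0 = (T3 ε ℓ)^[k] x0 - stepTime (u3 ε ℓ x0 k) * ε + stepInt (u3 ε ℓ x0 k) := by
  rw [Function.iterate_succ_apply']
  unfold u3
  generalize (T3 ε ℓ)^[k] x0 = y
  unfold T3
  split_ifs <;> simp [stepTime, stepInt] <;> ring

lemma T3_orbit (ε ℓ x0 : ℝ) (k : ℕ) :
    (T3 ε ℓ)^[k] x0 = x0 - rotTime (u3 ε ℓ x0) k * ε + rotInt (u3 ε ℓ x0) k := by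
  induction k with
  | zero => simp [rotTime, rotInt]
  | succ k ih =>
    rw [T3_step, ih]
    simp only [rotTime, rotInt, Finset.sum_range_succ]
    push_cast
    ring

lemma T3_mem {ε ℓ x0 : ℝ} (h0 : 0 < ε) (hl : max ε (1 - ε) < ℓ) (hl1 : ℓ < 1)
    (hx0 : x0 ∈ Set.Ico 0 ℓ) (k : ℕ) :
    0 ≤ (T3 ε ℓ)^[k] x0 ∧ (T3 ε ℓ)^[k] x0 < ℓ := by
  obtain ⟨ha, hb⟩ := max_lt_iff.1 hl
  induction k with
  | zero => exact hx0
  | succ k ih =>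
    rw [Function.iterate_succ_apply']
    generalize (T3 ε ℓ)^[k] x0 = y at ih
    unfold T3
    split_ifs <;> constructor <;> linarith [ih.1, ih.2]

lemma u3_eq_B {ε ℓ x0 : ℝ} {k : ℕ} (h : u3 ε ℓ x0 k = L3.B) :
    ℓ - 1 + ε ≤ (T3 ε ℓ)^[k] x0 ∧ (T3 ε ℓ)^[k] x0 < ε := by
  unfold u3 at h
  split_ifs at h with h1 h2
  exact ⟨not_lt.1 h1, h2⟩

/-- A sum over a sequence with local period `p` over a window of length `p` does not depend on
the position of the window. -/
lemma window_sum {M : Type*} [AddCommGroup M] (f : ℕ → M) (i p N : ℕ)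
    (hper : ∀ t < N, f (i+t+p) = f (i+t)) (t : ℕ) (ht : t ≤ N) :
    ∑ k ∈ Finset.range (i+t+p), f k - ∑ k ∈ Finset.range (i+t), f k =
      ∑ k ∈ Finset.range (i+p), f k - ∑ k ∈ Finset.range i, f k := by
  induction t with
  | zero => simp
  | succ t ih =>
    rw [← ih (by omega)]
    have e : i + (t+1) + p = i + t + p + 1 := by ring
    rw [e, ← add_assoc, Finset.sum_range_succ, Finset.sum_range_succ, hper t (by omega)]
    abel

/-- Along a run of the exchange whose letters have local period `p`, every rotation point `z`
in the covered range of times stays in `[0, 1)` after translation by the constant displacement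
`D` over one period. -/
lemma exists_good {ε ℓ x0 : ℝ} (h0 : 0 < ε) (hl : max ε (1 - ε) < ℓ) (hl1 : ℓ < 1)
    (hx0 : x0 ∈ Set.Ico 0 ℓ) (i p N : ℕ) (D : ℝ)
    (hper : ∀ t < N, u3 ε ℓ x0 (i+t+p) = u3 ε ℓ x0 (i+t))
    (hD : ∀ t ≤ N, (T3 ε ℓ)^[i+t+p] x0 = (T3 ε ℓ)^[i+t] x0 + D)
    (K : ℕ) (hK : K ≤ N) (n : ℕ) (hn : rotTime (u3 ε ℓ x0) i ≤ n)
    (hn' : n ≤ rotTime (u3 ε ℓ x0) (i+K)) :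
    ∃ z : ℝ, (∃ r : ℤ, x0 - n * ε = z + r) ∧ 0 ≤ z ∧ z < 1 ∧ 0 ≤ z + D ∧ z + D < 1 := by
  have onOrbit : ∀ t ≤ N, n = rotTime (u3 ε ℓ x0) (i+t) →
      ∃ z : ℝ, (∃ r : ℤ, x0 - n * ε = z + r) ∧ 0 ≤ z ∧ z < 1 ∧ 0 ≤ z + D ∧ z + D < 1 := by
    rintro t ht rfl
    have hm := T3_mem h0 hl hl1 hx0 (i+t)
    have hm' := T3_mem h0 hl hl1 hx0 (i+t+p)
    rw [hD t ht] at hm'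
    refine ⟨(T3 ε ℓ)^[i+t] x0, ⟨-rotInt (u3 ε ℓ x0) (i+t), ?_⟩, hm.1, by linarith [hm.2],
      hm'.1, by linarith [hm'.2]⟩
    rw [T3_orbit]; push_cast; ring
  induction K with
  | zero => exact onOrbit 0 (by omega) (by simpa using le_antisymm hn' hn)
  | succ K ih =>
    by_cases hle : n ≤ rotTime (u3 ε ℓ x0) (i+K)
    · exact ih (by omega) hle
    by_cases heq : n = rotTime (u3 ε ℓ x0) (i+(K+1))
    · exact onOrbit (K+1) hK heq
    have hs : rotTime (u3 ε ℓ x0) (i+(K+1)) =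
        rotTime (u3 ε ℓ x0) (i+K) + stepTime (u3 ε ℓ x0 (i+K)) := by
      rw [← add_assoc]; exact Finset.sum_range_succ _ _
    -- only a `B`-step skips a rotation time, and it skips exactly one
    obtain ⟨hB, hnK⟩ : u3 ε ℓ x0 (i+K) = L3.B ∧ n = rotTime (u3 ε ℓ x0) (i+K) + 1 := by
      cases hu : u3 ε ℓ x0 (i+K) <;> rw [hu] at hs <;> simp only [stepTime] at hs <;>
        first | omega | exact ⟨rfl, by omega⟩
    have hB' : u3 ε ℓ x0 (i+K+p) = L3.B := by rw [hper K (by omega), hB]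
    obtain ⟨b1, b2⟩ := u3_eq_B hB
    obtain ⟨b3, b4⟩ := u3_eq_B hB'
    rw [hD K (by omega)] at b3 b4
    obtain ⟨ha, hb⟩ := max_lt_iff.1 hl
    refine ⟨(T3 ε ℓ)^[i+K] x0 + 1 - ε, ⟨-rotInt (u3 ε ℓ x0) (i+K) - 1, ?_⟩, by linarith,
      by linarith, by linarith, by linarith⟩
    rw [T3_orbit, hnK]; push_cast; ring

/-- An occurrence of a power gives a run with local period `w.length`. -/
lemma power_period {α : Type*} (u : ℕ → α) (w : List α) (j : ℕ)
    (hfac : IsFactor (List.replicate (j+1) w).flatten u) :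
    ∃ i, ∀ t < j * w.length, u (i+t+w.length) = u (i+t) := by
  obtain ⟨i, hi⟩ := hfac
  refine ⟨i, fun t ht => ?_⟩
  have hlen : (List.replicate (j+1) w).flatten.length = (j+1) * w.length := by simp
  have hlen' : (List.replicate j w).flatten.length = j * w.length := by simp
  have hexp : (j+1) * w.length = j * w.length + w.length := by ring
  have hget : ∀ s < (j+1) * w.length, (List.replicate (j+1) w).flatten[s]? = some (u (i+s)) := by
    intro s hs
    rw [hi, hlen]
    simp [hs]
  have e1 : (List.replicate (j+1) w).flatten = w ++ (List.replicate j w).flatten := by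
    simp [List.replicate_succ]
  have e2 : (List.replicate (j+1) w).flatten = (List.replicate j w).flatten ++ w := by
    simp [List.replicate_succ']
  have g1 := hget (t + w.length) (by omega)
  have g2 := hget t (by omega)
  rw [e1, List.getElem?_append_right (by omega), Nat.add_sub_cancel] at g1
  rw [e2, List.getElem?_append_left (by omega)] at g2
  rw [g1] at g2
  rw [add_assoc]
  exact Option.some.inj g2

/-- integer exponents of powers of factors occurring in a 3iet word are
bounded by `2 + sup_n a_n` (the supremum taken in `ℕ ∪ {+∞}`). -/
theorem threeIet_integer_power_le
    (ε ℓ x0 : ℝ) (hirr : Irrational ε) (h0 : 0 < ε) (h1 : ε < 1)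
    (hl : max ε (1 - ε) < ℓ) (hl1 : ℓ < 1) (hx0 : x0 ∈ Set.Ico 0 ℓ)
    (w : List L3) (hw : w ≠ []) (j : ℕ)
    (hfac : IsFactor (List.replicate j w).flatten (u3 ε ℓ x0)) :
    (j : ℕ∞) ≤ 2 + ⨆ n : ℕ, (cfa ε n : ℕ∞) := by
  suffices h : ∃ n, j ≤ 2 + cfa ε n by
    obtain ⟨n, hn⟩ := h
    calc (j : ℕ∞) ≤ ((2 + cfa ε n : ℕ) : ℕ∞) := by exact_mod_cast hn
      _ = 2 + (cfa ε n : ℕ∞) := by push_cast; rfl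
      _ ≤ _ := by gcongr; exact le_iSup (fun n => (cfa ε n : ℕ∞)) n
  rcases j with _ | j
  · exact ⟨0, by omega⟩
  obtain ⟨i, hper⟩ := power_period _ _ _ hfac
  set u := u3 ε ℓ x0 with hu
  set p := w.length with hp
  have hp0 : 0 < p := List.length_pos_iff.2 hw
  -- `q` and `r` are the rotation time and the integer translation over one period
  set q : ℤ := (rotTime u (i+p) : ℤ) - rotTime u i with hq
  set r : ℤ := rotInt u (i+p) - rotInt u i with hr
  have hqt : ∀ t ≤ j * p, (rotTime u (i+t+p) : ℤ) - rotTime u (i+t) = q := by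
    intro t ht
    have := window_sum (fun k => (stepTime (u k) : ℤ)) i p (j*p)
      (fun t ht => by simp only [hper t ht]) t ht
    rw [hq]
    simp only [rotTime]
    push_cast
    exact this
  have hrt : ∀ t ≤ j * p, rotInt u (i+t+p) - rotInt u (i+t) = r := fun t ht =>
    window_sum (fun k => stepInt (u k)) i p (j*p) (fun t ht => by simp only [hper t ht]) t ht
  have hqpos : 0 < q := by
    have hlt : rotTime u i < rotTime u (i+p) := by
      unfold rotTime
      rw [Finset.sum_range_add]
      have : 0 < ∑ x ∈ Finset.range p, stepTime (u (i+x)) := by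
        refine Finset.sum_pos (fun x _ => ?_) ⟨0, by simpa using hp0⟩
        cases u (i+x) <;> simp [stepTime]
      omega
    omega
  set D : ℝ := (r : ℝ) - q * ε with hDdef
  have hD : ∀ t ≤ j * p, (T3 ε ℓ)^[i+t+p] x0 = (T3 ε ℓ)^[i+t] x0 + D := by
    intro t ht
    have e1 : ((rotTime u (i+t+p) : ℤ) : ℝ) - (rotTime u (i+t) : ℤ) = q := by
      exact_mod_cast hqt t ht
    have e2 : (rotInt u (i+t+p) : ℝ) - rotInt u (i+t) = r := by exact_mod_cast hrt t ht
    push_cast at e1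
    rw [T3_orbit, T3_orbit ε ℓ x0 (i+t), ← hu]
    linear_combination e2 - ε * e1
  have htotal : ∀ s ≤ j, (rotTime u (i+s*p) : ℤ) = rotTime u i + s * q := by
    intro s
    induction s with
    | zero => simp
    | succ s ih =>
      intro hs
      have h2 := hqt (s*p) (Nat.mul_le_mul_right p (by omega))
      have h3 := ih (by omega)
      have e : i + (s+1)*p = i + s*p + p := by ring
      rw [e]
      push_cast
      linarith
  -- the index `m` with `qq ε (m+1) ≤ q < qq ε (m+2)`
  obtain ⟨m, hm1, hm2⟩ : ∃ m, (qq ε (m+1) : ℤ) ≤ q ∧ q < qq ε (m+2) := by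
    have hex : ∃ m, q < qq ε (m+2) := by
      refine ⟨q.toNat, ?_⟩
      have := (le_qq_succ hirr h0 h1 (q.toNat+1)).1
      have e : qq ε (q.toNat+2) = qq ε (q.toNat+1+1) := rfl
      omega
    classical
    refine ⟨Nat.find hex, ?_, Nat.find_spec hex⟩
    rcases hf : Nat.find hex with _ | m
    · have e : qq ε (0+1) = 1 := rfl
      rw [e]; omega
    · have := Nat.find_min hex (m := m) (by omega)
      exact not_lt.1 this
  refine ⟨m, ?_⟩
  by_contra hj
  push Not at hj
  have hηD : eta ε (m+1) ≤ |D| := best_approx hirr h0 h1 (m+1) q r hqpos hm2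
  have hη := eta_pos hirr h0 h1 (m+1)
  -- there are enough rotation points for `rotation_visits`
  have hcount : rotTime u i + qq ε (m+1) + qq ε (m+2) ≤ rotTime u (i+j*p) := by
    have ht := htotal j le_rfl
    have hmono := qq_le_succ hirr h0 h1 m
    have hrec : qq ε (m+2) = cfa ε m * qq ε (m+1) + qq ε m := rfl
    have hge : (cfa ε m + 2) * qq ε (m+1) ≤ j * qq ε (m+1) := Nat.mul_le_mul_right _ (by omega)
    have hge' : (j : ℤ) * qq ε (m+1) ≤ j * q := by gcongr
    zify at hrec hge hmono ⊢
    linarith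
  have hgood : ∀ k, rotTime u i ≤ k → k < rotTime u i + qq ε (m+1) + qq ε (m+2) →
      ∃ z : ℝ, (∃ r : ℤ, x0 - k * ε = z + r) ∧ 0 ≤ z ∧ z < 1 ∧ 0 ≤ z + D ∧ z + D < 1 :=
    fun k hk hk' => exists_good h0 hl hl1 hx0 i p (j*p) D hper hD (j*p) le_rfl k hk
      (by rw [← hu]; omega)
  rcases le_or_gt 0 D with hs | hs
  · rw [abs_of_nonneg hs] at hηD
    refine rotation_visits hirr h0 h1 m (rotTime u i) (x0 + D) (fun k hk hk' => ?_)
    obtain ⟨z, ⟨r', hr'⟩, z1, z2, z3, z4⟩ := hgood k hk hk'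
    have e : x0 + D - k * ε = (z + D) + r' := by linarith
    rw [e, Int.fract_add_intCast, Int.fract_eq_self.2 ⟨z3, z4⟩]
    linarith
  · rw [abs_of_neg hs] at hηD
    refine rotation_visits hirr h0 h1 m (rotTime u i) x0 (fun k hk hk' => ?_)
    obtain ⟨z, ⟨r', hr'⟩, z1, z2, z3, z4⟩ := hgood k hk hk'
    rw [hr', Int.fract_add_intCast, Int.fract_eq_self.2 ⟨z1, z2⟩]
    linarith
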